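/- Any 2-edge-coloring of the complete graph K_20 that contains a monochromatic copy of K_5 also contains two vertex-disjoint monochromatic copies of K_4. -/

import Mathlib

/-- `s` is monochromatic under the edge-coloring `c`. -/
def IsMono {N : ℕ} (c : Fin N → Fin N → Bool) (s : Finset (Fin N)) : Prop :=
  ∃ col : Bool, ∀ u ∈ s, ∀ v ∈ s, u ≠ v → c u v = col

namespace TwoK4

/-- `s` is a clique of color `col`. -/
def Mo (c : Fin 20 → Fin 20 → Bool) (col : Bool) (s : Finset (Fin 20)) : Prop :=
  ∀ u ∈ s, ∀ v ∈ s, u ≠ v → c u v = col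

/-- neighbours of `v` in `S` in color `col`. -/
def nb (c : Fin 20 → Fin 20 → Bool) (col : Bool) (S : Finset (Fin 20)) (v : Fin 20) :
    Finset (Fin 20) := S.filter (fun u => u ≠ v ∧ c v u = col)

/-- no monochromatic `K_4` inside `S`. -/
def Free (c : Fin 20 → Fin 20 → Bool) (S : Finset (Fin 20)) : Prop :=
  ∀ T ⊆ S, T.card = 4 → ∀ col, ¬ Mo c col T

/-- no two disjoint monochromatic `K_4`. -/
def NoTwo (c : Fin 20 → Fin 20 → Bool) : Prop :=
  ∀ s t : Finset (Fin 20), ∀ a b, s.card = 4 → t.card = 4 → Mo c a s → Mo c b t →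
    Disjoint s t → False

variable {c : Fin 20 → Fin 20 → Bool} {col : Bool}

lemma mem_nb {S : Finset (Fin 20)} {u v : Fin 20} :
    u ∈ nb c col S v ↔ u ∈ S ∧ u ≠ v ∧ c v u = col := by
  simp [nb]

lemma nb_sub {S : Finset (Fin 20)} {v : Fin 20} : nb c col S v ⊆ S :=
  Finset.filter_subset _ _

lemma Mo.mono {S T : Finset (Fin 20)} (h : Mo c col S) (hT : T ⊆ S) : Mo c col T :=
  fun u hu v hv => h u (hT hu) v (hT hv)

lemma Mo.insert (hs : ∀ u v, c u v = c v u) {T : Finset (Fin 20)} {v : Fin 20}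
    (h : Mo c col T) (hv : ∀ u ∈ T, c v u = col) : Mo c col (insert v T) := by
  intro a ha b hb hab
  rw [Finset.mem_insert] at ha hb
  rcases ha with rfl | ha <;> rcases hb with rfl | hb
  · exact absurd rfl hab
  · exact hv b hb
  · rw [hs]; exact hv a ha
  · exact h a ha b hb hab

lemma mo_pair (hs : ∀ u v, c u v = c v u) {a b : Fin 20} (h : c a b = col) :
    Mo c col {a, b} := by
  apply Mo.insert hs
  · intro u hu v hv huv
    simp only [Finset.mem_singleton] at hu hv
    exact absurd (hu.trans hv.symm) huv
  · intro u hu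
    rw [Finset.mem_singleton] at hu
    rw [hu, h]

lemma exists_edge {S : Finset (Fin 20)} (h : ¬ Mo c (!col) S) :
    ∃ a ∈ S, ∃ b ∈ S, a ≠ b ∧ c a b = col := by
  unfold Mo at h
  push Not at h
  obtain ⟨a, ha, b, hb, hab, h⟩ := h
  refine ⟨a, ha, b, hb, hab, ?_⟩
  cases hc : c a b <;> cases col <;> simp_all

lemma nb_add (S : Finset (Fin 20)) {v : Fin 20} (hv : v ∈ S) :
    (nb c col S v).card + (nb c (!col) S v).card + 1 = S.card := by
  have h1 : nb c col S v ∪ nb c (!col) S v = S.erase v := by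
    ext u
    simp only [Finset.mem_union, mem_nb, Finset.mem_erase]
    cases c v u <;> cases col <;> simp <;> tauto
  have h2 : Disjoint (nb c col S v) (nb c (!col) S v) := by
    rw [Finset.disjoint_left]
    intro u h1 h2
    rw [mem_nb] at h1 h2
    have := h1.2.2.symm.trans h2.2.2
    cases col <;> simp at this
  rw [← Finset.card_union_of_disjoint h2, h1, Finset.card_erase_add_one hv]

/-- `R(3,3) ≤ 6`. -/
lemma r33 (hs : ∀ u v, c u v = c v u) (S : Finset (Fin 20)) (hS : 6 ≤ S.card) :
    ∃ T ⊆ S, T.card = 3 ∧ ∃ a, Mo c a T := by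
  obtain ⟨v, hv⟩ : S.Nonempty := Finset.card_pos.mp (by omega)
  have key : ∃ a, 3 ≤ (nb c a S v).card := by
    by_contra hcon
    push Not at hcon
    have := nb_add (c := c) (col := true) S hv
    have h1 := hcon true
    have h2 := hcon (!true)
    omega
  obtain ⟨a, ha⟩ := key
  obtain ⟨T, hT, hc⟩ := Finset.exists_subset_card_eq ha
  by_cases h : Mo c (!a) T
  · exact ⟨T, hT.trans nb_sub, hc, _, h⟩
  · obtain ⟨p, hp, q, hq, hpq, h⟩ := exists_edge h
    have hp' := mem_nb.mp (hT hp)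
    have hq' := mem_nb.mp (hT hq)
    refine ⟨{v, p, q}, ?_, ?_, a, ?_⟩
    · intro u hu
      simp only [Finset.mem_insert, Finset.mem_singleton] at hu
      rcases hu with rfl | rfl | rfl
      exacts [hv, hp'.1, hq'.1]
    · exact Finset.card_eq_three.mpr ⟨_, _, _, hp'.2.1.symm, hq'.2.1.symm, hpq, rfl⟩
    · apply Mo.insert hs (mo_pair hs h)
      intro u hu
      simp only [Finset.mem_insert, Finset.mem_singleton] at hu
      rcases hu with rfl | rfl
      exacts [hp'.2.2, hq'.2.2]

/-- `R(3,4) ≤ 9`. -/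
lemma r34 (hs : ∀ u v, c u v = c v u) (col : Bool) (S' : Finset (Fin 20)) (hS : 9 ≤ S'.card) :
    (∃ T ⊆ S', T.card = 3 ∧ Mo c col T) ∨ (∃ T ⊆ S', T.card = 4 ∧ Mo c (!col) T) := by
  obtain ⟨S, hSS, hS⟩ := Finset.exists_subset_card_eq hS
  by_contra hcon
  push Not at hcon
  obtain ⟨h3, h4⟩ := hcon
  have d1 : ∀ v ∈ S, (nb c col S v).card ≤ 3 := by
    intro v hv
    by_contra hlt
    obtain ⟨T, hT, hc⟩ := Finset.exists_subset_card_eq (show 4 ≤ (nb c col S v).card by omega)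
    obtain ⟨p, hp, q, hq, hpq, h⟩ := exists_edge (h4 T ((hT.trans nb_sub).trans hSS) hc)
    have hp' := mem_nb.mp (hT hp)
    have hq' := mem_nb.mp (hT hq)
    refine h3 {v, p, q} ?_ ?_ ?_
    · intro u hu
      simp only [Finset.mem_insert, Finset.mem_singleton] at hu
      rcases hu with rfl | rfl | rfl
      exacts [hSS hv, hSS hp'.1, hSS hq'.1]
    · exact Finset.card_eq_three.mpr ⟨_, _, _, hp'.2.1.symm, hq'.2.1.symm, hpq, rfl⟩
    · apply Mo.insert hs (mo_pair hs h)
      intro u hu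
      simp only [Finset.mem_insert, Finset.mem_singleton] at hu
      rcases hu with rfl | rfl
      exacts [hp'.2.2, hq'.2.2]
  have d2 : ∀ v ∈ S, (nb c (!col) S v).card ≤ 5 := by
    intro v hv
    by_contra hlt
    obtain ⟨T, hT, hc, a, ha⟩ := r33 hs (nb c (!col) S v) (by omega)
    by_cases hcol : a = col
    · subst hcol
      exact h3 T ((hT.trans nb_sub).trans hSS) hc ha
    · have : a = !col := by cases a <;> cases col <;> simp_all
      subst this
      have hvT : v ∉ T := fun h => (mem_nb.mp (hT h)).2.1 rfl
      refine h4 (insert v T) ?_ ?_ ?_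
      · exact Finset.insert_subset (hSS hv) ((hT.trans nb_sub).trans hSS)
      · rw [Finset.card_insert_of_notMem hvT, hc]
      · exact ha.insert hs fun u hu => (mem_nb.mp (hT hu)).2.2
  have d3 : ∀ v ∈ S, (nb c col S v).card = 3 := by
    intro v hv
    have := nb_add (c := c) (col := col) S hv
    have := d1 v hv
    have := d2 v hv
    omega
  classical
  let G : SimpleGraph (Fin 20) :=
    { Adj := fun u v => u ∈ S ∧ v ∈ S ∧ u ≠ v ∧ c u v = col
      symm := ⟨fun u v h => ⟨h.2.1, h.1, h.2.2.1.symm, by rw [hs]; exact h.2.2.2⟩⟩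
      loopless := ⟨fun u h => h.2.2.1 rfl⟩ }
  have hE := G.even_card_odd_degree_vertices
  have hd : ∀ v, Odd (G.degree v) ↔ v ∈ S := by
    intro v
    by_cases hv : v ∈ S
    · have : G.neighborFinset v = nb c col S v := by
        ext u
        rw [SimpleGraph.mem_neighborFinset, mem_nb]
        constructor
        · exact fun h => ⟨h.2.1, h.2.2.1.symm, h.2.2.2⟩
        · exact fun h => ⟨hv, h.1, h.2.1.symm, h.2.2⟩
      rw [← SimpleGraph.card_neighborFinset_eq_degree, this, d3 v hv]
      simp only [hv, iff_true]
      decide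
    · have : G.neighborFinset v = ∅ := by
        ext u
        rw [SimpleGraph.mem_neighborFinset]
        constructor
        · exact fun h => absurd h.1 hv
        · exact fun h => absurd h (Finset.notMem_empty _)
      rw [← SimpleGraph.card_neighborFinset_eq_degree, this]
      simp [hv]
  have : (Finset.univ.filter fun v => Odd (G.degree v)) = S := by
    ext v
    simp [hd]
  rw [this, hS] at hE
  exact absurd hE (by decide)

lemma deg_le (hs : ∀ u v, c u v = c v u) {S : Finset (Fin 20)} (hF : Free c S)
    {v : Fin 20} (hv : v ∈ S) (col : Bool) : (nb c col S v).card ≤ 8 := by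
  by_contra hlt
  rcases r34 hs col (nb c col S v) (by omega) with ⟨T, hT, hc, h⟩ | ⟨T, hT, hc, h⟩
  · have hvT : v ∉ T := fun h => (mem_nb.mp (hT h)).2.1 rfl
    refine hF (insert v T) (Finset.insert_subset hv (hT.trans nb_sub)) ?_ col ?_
    · rw [Finset.card_insert_of_notMem hvT, hc]
    · exact h.insert hs fun u hu => (mem_nb.mp (hT hu)).2.2
  · exact hF T (hT.trans nb_sub) hc _ h

lemma free_insert (hno : NoTwo c) {N : Finset (Fin 20)} (hN : N.card = 5)
    (hM : Mo c col N) {x : Fin 20} (hx : x ∈ N) : Free c (insert x Nᶜ) := by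
  intro T hT hc a ha
  refine hno T (N.erase x) a col hc ?_ ha (hM.mono (Finset.erase_subset _ _)) ?_
  · rw [Finset.card_erase_of_mem hx, hN]
  · rw [Finset.disjoint_left]
    intro u hu hu'
    have := hT hu
    simp at this hu'
    tauto

/-- Lemma A: blue degree of a vertex of a red `K_5` is at most 8. -/
lemma blue_le (hs : ∀ u v, c u v = c v u) (hno : NoTwo c) {N : Finset (Fin 20)}
    (hN : N.card = 5) (hM : Mo c col N) {x : Fin 20} (hx : x ∈ N) :
    (nb c (!col) Finset.univ x).card ≤ 8 := by
  refine le_trans (Finset.card_le_card ?_)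
    (deg_le hs (free_insert hno hN hM hx) (Finset.mem_insert_self _ _) (!col))
  intro u hu
  rw [mem_nb] at hu ⊢
  refine ⟨?_, hu.2⟩
  rw [Finset.mem_insert, Finset.mem_compl]
  right
  intro huN
  have := (hM x hx u huN hu.2.1.symm).symm.trans hu.2.2
  cases col <;> simp at this

/-- The 17-vertex set is free. -/
lemma free17 (hs : ∀ u v, c u v = c v u) (hno : NoTwo c) {N : Finset (Fin 20)}
    (hN : N.card = 5) (hM : Mo c col N) {x y w : Fin 20} (hx : x ∈ N) (hy : y ∈ N) (hxy : x ≠ y)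
    (hw : w ∉ N) (hwx : c w x = !col) (hz : ∀ z ∈ N, z ≠ x → z ≠ y → c w z = col) :
    Free c (insert x (insert y Nᶜ)) := by
  intro T hT hc a ha
  have hnx : ¬ (x ∈ T ∧ y ∈ T) → False := by
    intro h
    by_cases hxT : x ∈ T
    · refine free_insert hno hN hM hx T ?_ hc a ha
      intro u hu
      have := hT hu
      simp only [Finset.mem_insert] at this ⊢
      rcases this with h1 | rfl | h1
      · exact Or.inl h1
      · exact absurd ⟨hxT, hu⟩ h
      · exact Or.inr h1
    · refine free_insert hno hN hM hy T ?_ hc a ha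
      intro u hu
      have := hT hu
      simp only [Finset.mem_insert] at this ⊢
      rcases this with rfl | h1
      · exact absurd hu hxT
      · exact h1
  by_cases hboth : x ∈ T ∧ y ∈ T
  · obtain ⟨hxT, hyT⟩ := hboth
    have hac : a = col := (ha x hxT y hyT hxy).symm.trans (hM x hx y hy hxy)
    have hwT : w ∉ T := by
      intro hwT
      have h1 := ha w hwT x hxT (by rintro rfl; exact hw hx)
      rw [hwx, hac] at h1
      cases col <;> simp at h1
    have hwN : w ∉ (N.erase x).erase y := fun h =>
      hw (Finset.mem_of_mem_erase (Finset.mem_of_mem_erase h))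
    refine hno T (insert w ((N.erase x).erase y)) a col hc ?_ ha ?_ ?_
    · rw [Finset.card_insert_of_notMem hwN, Finset.card_erase_of_mem, Finset.card_erase_of_mem hx,
        hN]
      exact Finset.mem_erase.mpr ⟨hxy.symm, hy⟩
    · refine Mo.insert hs
        (hM.mono ((Finset.erase_subset _ _).trans (Finset.erase_subset _ _))) ?_
      intro u hu
      simp only [Finset.mem_erase] at hu
      exact hz u hu.2.2 hu.2.1 hu.1
    · rw [Finset.disjoint_left]
      intro u hu hu'
      have := hT hu
      simp only [Finset.mem_insert, Finset.mem_erase, Finset.mem_compl] at this hu'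
      rcases hu' with rfl | hu'
      · exact hwT hu
      · tauto
  · exact hnx hboth

lemma card17 {N : Finset (Fin 20)} (hN : N.card = 5) {x y : Fin 20} (hx : x ∈ N) (hy : y ∈ N)
    (hxy : x ≠ y) : (insert x (insert y Nᶜ)).card = 17 := by
  rw [Finset.card_insert_of_notMem, Finset.card_insert_of_notMem, Finset.card_compl, hN]
  · simp
  · simpa using hy
  · simp [hxy, hx]

lemma deg17 (hs : ∀ u v, c u v = c v u) {S : Finset (Fin 20)} (hF : Free c S)
    (hS : S.card = 17) {v : Fin 20} (hv : v ∈ S) (col : Bool) : (nb c col S v).card = 8 := by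
  have h1 := deg_le hs hF hv col
  have h2 := deg_le hs hF hv (!col)
  have h3 := nb_add (c := c) (col := col) S hv
  omega

lemma card_nb_insert {S : Finset (Fin 20)} {x v : Fin 20} (hx : x ∉ S) (hxv : x ≠ v) :
    (nb c col (insert x S) v).card = (nb c col S v).card + if c v x = col then 1 else 0 := by
  unfold nb
  rw [Finset.filter_insert]
  by_cases h : c v x = col
  · simp [h, hxv, hx]
  · simp [h]

/-- no vertex has exactly three red neighbours. -/
lemma not_three (hs : ∀ u v, c u v = c v u) (hno : NoTwo c) {N : Finset (Fin 20)}
    (hN : N.card = 5) (hM : Mo c col N) {x y w : Fin 20} (hx : x ∈ N) (hy : y ∈ N) (hxy : x ≠ y)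
    (hw : w ∉ N) (hwx : c w x = !col) (hwy : c w y = !col)
    (hz : ∀ z ∈ N, z ≠ x → z ≠ y → c w z = col) : False := by
  have hF := free17 hs hno hN hM hx hy hxy hw hwx hz
  have hwx' : x ≠ w := by rintro rfl; exact hw hx
  have hwy' : y ≠ w := by rintro rfl; exact hw hy
  have hd := deg17 hs hF (card17 hN hx hy hxy) (v := w) (by simp [hw]) col
  rw [card_nb_insert (by simp [hx, hxy]) hwx', card_nb_insert (by simp [hy]) hwy', hwx, hwy] at hd
  have hne : (!col) ≠ col := by cases col <;> simp
  simp only [hne, if_false] at hd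
  obtain ⟨z, hzN⟩ : ((N.erase x).erase y).Nonempty := by
    rw [← Finset.card_pos, Finset.card_erase_of_mem (Finset.mem_erase.mpr ⟨hxy.symm, hy⟩),
      Finset.card_erase_of_mem hx, hN]
    norm_num
  simp only [Finset.mem_erase] at hzN
  have hzw : z ≠ w := by rintro rfl; exact hw hzN.2.2
  have h9 := deg_le hs (free_insert hno hN hM hzN.2.2) (v := w) (by simp [hw]) col
  rw [card_nb_insert (by simp [hzN.2.2]) hzw, hz z hzN.2.2 hzN.2.1 hzN.1] at h9
  simp at h9
  omega

/-- no vertex has exactly four red neighbours. -/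
lemma not_four (hs : ∀ u v, c u v = c v u) (hno : NoTwo c) {N : Finset (Fin 20)}
    (hN : N.card = 5) (hM : Mo c col N) {x w : Fin 20} (hx : x ∈ N)
    (hw : w ∉ N) (hwx : c w x = !col)
    (hz : ∀ z ∈ N, z ≠ x → c w z = col) : False := by
  have hF : ∀ y ∈ N, x ≠ y → Free c (insert x (insert y Nᶜ)) := fun y hy hxy =>
    free17 hs hno hN hM hx hy hxy hw hwx (fun z h1 h2 _ => hz z h1 h2)
  -- all vertices outside treat the four `y` alike
  have same : ∀ u ∉ N, ∀ y ∈ N, ∀ y' ∈ N, x ≠ y → x ≠ y' → c u y = col → c u y' = col := by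
    intro u hu y hy y' hy' hxy hxy' hcol
    have hux : x ≠ u := by rintro rfl; exact hu hx
    have huy : y ≠ u := by rintro rfl; exact hu hy
    have huy' : y' ≠ u := by rintro rfl; exact hu hy'
    have h1 := deg17 hs (hF y hy hxy) (card17 hN hx hy hxy) (v := u) (by simp [hu]) col
    have h2 := deg17 hs (hF y' hy' hxy') (card17 hN hx hy' hxy') (v := u) (by simp [hu]) col
    rw [card_nb_insert (by simp [hx, hxy]) hux, card_nb_insert (by simp [hy]) huy] at h1
    rw [card_nb_insert (by simp [hx, hxy']) hux, card_nb_insert (by simp [hy']) huy'] at h2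
    by_contra hne
    rw [if_pos hcol] at h1
    rw [if_neg hne] at h2
    omega
  have h4 : (N.erase x).card = 4 := by rw [Finset.card_erase_of_mem hx, hN]
  obtain ⟨y1, y2, y3, y4, h12, h13, h14, h23, h24, h34, hE⟩ := Finset.card_eq_four.mp h4
  have hm : ∀ y ∈ ({y1, y2, y3, y4} : Finset (Fin 20)), x ≠ y ∧ y ∈ N := by
    intro y hy
    rw [← hE, Finset.mem_erase] at hy
    exact ⟨hy.1.symm, hy.2⟩
  obtain ⟨hx1, hy1⟩ := hm y1 (by simp)
  obtain ⟨hx2, hy2⟩ := hm y2 (by simp)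
  obtain ⟨hx3, hy3⟩ := hm y3 (by simp)
  obtain ⟨hx4, hy4⟩ := hm y4 (by simp)
  have hR : (nb c col Nᶜ y1).card = 7 := by
    have hd := deg17 hs (hF y1 hy1 hx1) (card17 hN hx hy1 hx1) (v := y1) (by simp) col
    have hnb : nb c col (insert y1 Nᶜ) y1 = nb c col Nᶜ y1 := by
      ext u
      simp only [mem_nb, Finset.mem_insert]
      tauto
    rw [card_nb_insert (by simp [hx, hx1]) hx1, hnb, if_pos (hM y1 hy1 x hx hx1.symm)] at hd
    omega
  have hred : ∀ u ∈ nb c col Nᶜ y1, u ∉ N ∧ ∀ y ∈ N, x ≠ y → c y u = col := by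
    intro u hu
    rw [mem_nb, Finset.mem_compl] at hu
    refine ⟨hu.1, fun y hy hxy => ?_⟩
    rw [hs]
    exact same u hu.1 y1 hy1 y hy hx1 hxy (by rw [hs]; exact hu.2.2)
  have edge : ∀ R ⊆ nb c col Nᶜ y1, 4 ≤ R.card → ∃ a ∈ R, ∃ b ∈ R, a ≠ b ∧ c a b = col := by
    intro R hR h4
    obtain ⟨T, hT, hc⟩ := Finset.exists_subset_card_eq h4
    have : ¬ Mo c (!col) T := by
      refine free_insert hno hN hM hx T ?_ hc _
      exact ((hT.trans hR).trans nb_sub).trans (Finset.subset_insert _ _)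
    obtain ⟨a, ha, b, hb, h⟩ := exists_edge this
    exact ⟨a, hT ha, b, hT hb, h⟩
  obtain ⟨a, ha, b, hb, hab, cab⟩ := edge _ (Finset.Subset.refl _) (by omega)
  obtain ⟨p, hp, q, hq, hpq, cpq⟩ := edge (((nb c col Nᶜ y1).erase a).erase b)
    ((Finset.erase_subset _ _).trans (Finset.erase_subset _ _)) (by
      rw [Finset.card_erase_of_mem (Finset.mem_erase.mpr ⟨hab.symm, hb⟩),
        Finset.card_erase_of_mem ha]
      omega)
  simp only [Finset.mem_erase] at hp hq
  obtain ⟨haN, hac⟩ := hred a ha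
  obtain ⟨hbN, hbc⟩ := hred b hb
  obtain ⟨hpN, hpc⟩ := hred p hp.2.2
  obtain ⟨hqN, hqc⟩ := hred q hq.2.2
  have ne : ∀ {y u}, y ∈ N → u ∉ N → y ≠ u := by
    rintro y u hy hu rfl
    exact hu hy
  have mk : ∀ y ∈ N, ∀ z ∈ N, y ≠ z → x ≠ y → x ≠ z → ∀ a b, a ∉ N → b ∉ N → a ≠ b →
      c a b = col → (∀ y ∈ N, x ≠ y → c y a = col) → (∀ y ∈ N, x ≠ y → c y b = col) →
      ({y, z, a, b} : Finset (Fin 20)).card = 4 ∧ Mo c col {y, z, a, b} := by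
    intro y hy z hz hyz hxy hxz a b ha hb hab cab hca hcb
    refine ⟨Finset.card_eq_four.mpr ⟨y, z, a, b, hyz, ne hy ha, ne hy hb, ne hz ha, ne hz hb,
      hab, rfl⟩, ?_⟩
    refine Mo.insert hs (Mo.insert hs (mo_pair hs cab) ?_) ?_
    · intro u hu
      simp only [Finset.mem_insert, Finset.mem_singleton] at hu
      rcases hu with rfl | rfl
      exacts [hca z hz hxz, hcb z hz hxz]
    · intro u hu
      simp only [Finset.mem_insert, Finset.mem_singleton] at hu
      rcases hu with rfl | rfl | rfl
      exacts [hM y hy _ hz hyz, hca y hy hxy, hcb y hy hxy]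
  obtain ⟨k1, m1⟩ := mk y1 hy1 y2 hy2 h12 hx1 hx2 a b haN hbN hab cab hac hbc
  obtain ⟨k2, m2⟩ := mk y3 hy3 y4 hy4 h34 hx3 hx4 p q hpN hqN hpq cpq hpc hqc
  refine hno _ _ _ _ k1 k2 m1 m2 ?_
  have e1 := ne hy1 hpN
  have e2 := ne hy1 hqN
  have e3 := ne hy2 hpN
  have e4 := ne hy2 hqN
  have e5 := ne hy3 haN
  have e6 := ne hy3 hbN
  have e7 := ne hy4 haN
  have e8 := ne hy4 hbN
  rw [Finset.disjoint_left]
  intro u hu hu'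
  simp only [Finset.mem_insert, Finset.mem_singleton] at hu hu'
  grind

/-- Lemma C: three red neighbours in a red `K_5` force five. -/
lemma five_of_three (hs : ∀ u v, c u v = c v u) (hno : NoTwo c) {N : Finset (Fin 20)}
    (hN : N.card = 5) (hM : Mo c col N) {w : Fin 20} (hw : w ∉ N)
    (h3 : 3 ≤ (nb c col N w).card) : ∀ z ∈ N, c w z = col := by
  have hnot : ∀ z, c w z ≠ col → c w z = !col := by
    intro z h
    cases hc : c w z <;> cases col <;> simp_all
  intro x hx
  by_contra hxc
  by_cases hy : ∃ y ∈ N, y ≠ x ∧ c w y ≠ col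
  · obtain ⟨y, hy, hyx, hyc⟩ := hy
    refine not_three hs hno hN hM hx hy hyx.symm hw (hnot _ hxc) (hnot _ hyc) ?_
    intro z hz hzx hzy
    by_contra hzc
    have hsub : nb c col N w ⊆ ((N.erase x).erase y).erase z := by
      intro u hu
      rw [mem_nb] at hu
      simp only [Finset.mem_erase]
      refine ⟨?_, ?_, ?_, hu.1⟩ <;> rintro rfl
      exacts [hzc hu.2.2, hyc hu.2.2, hxc hu.2.2]
    have := Finset.card_le_card hsub
    rw [Finset.card_erase_of_mem (by simp [*]), Finset.card_erase_of_mem (by simp [*]),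
      Finset.card_erase_of_mem hx, hN] at this
    omega
  · push Not at hy
    exact not_four hs hno hN hM hx hw (hnot _ hxc) hy

/-- Lemma B: a red clique of size `≥ 5` extends by one vertex. -/
lemma extend (hs : ∀ u v, c u v = c v u) (hno : NoTwo c) {Q : Finset (Fin 20)}
    (h5 : 5 ≤ Q.card) (h7 : Q.card ≤ 7) (hM : Mo c col Q) :
    ∃ Q' : Finset (Fin 20), Q'.card = Q.card + 1 ∧ Mo c col Q' := by
  have hout : ∀ x ∈ Q, 12 - Q.card ≤ (nb c col Qᶜ x).card := by
    intro x hx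
    obtain ⟨N, hxN, hNQ, hN⟩ := Finset.exists_subsuperset_card_eq
      (Finset.singleton_subset_iff.mpr hx) (by simp) h5
    have hb := blue_le hs hno hN (hM.mono hNQ) (hxN (Finset.mem_singleton_self x))
    have ha := nb_add (c := c) (col := col) Finset.univ (Finset.mem_univ x)
    have hsub : nb c col Finset.univ x ⊆ nb c col Qᶜ x ∪ Q.erase x := by
      intro u hu
      simp only [mem_nb, Finset.mem_union, Finset.mem_compl, Finset.mem_erase] at hu ⊢
      tauto
    have h1 := (Finset.card_le_card hsub).trans (Finset.card_union_le _ _)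
    rw [Finset.card_erase_of_mem hx] at h1
    simp only [Finset.card_univ, Fintype.card_fin] at ha
    omega
  have hw : ∃ w ∈ Qᶜ, 3 ≤ (nb c col Q w).card := by
    by_contra hcon
    push Not at hcon
    have hsum : ∑ x ∈ Q, (nb c col Qᶜ x).card = ∑ w ∈ Qᶜ, (nb c col Q w).card := by
      have := Finset.sum_card_bipartiteAbove_eq_sum_card_bipartiteBelow
        (s := Q) (t := Qᶜ) (fun x w => w ≠ x ∧ c x w = col)
      refine this.trans (Finset.sum_congr rfl fun w _ => ?_)
      congr 1
      ext u
      simp only [Finset.mem_bipartiteBelow, mem_nb]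
      rw [hs u w, ne_comm]
    have hl := Finset.card_nsmul_le_sum Q (fun x => (nb c col Qᶜ x).card) _ hout
    have hr := Finset.sum_le_card_nsmul Qᶜ (fun w => (nb c col Q w).card) 2
      (fun w hw => by have := hcon w hw; omega)
    rw [hsum] at hl
    have := hl.trans hr
    rw [Finset.card_compl] at this
    simp only [Fintype.card_fin, smul_eq_mul] at this
    generalize Q.card = k at *
    interval_cases k <;> omega
  obtain ⟨w, hwQ, hw3⟩ := hw
  rw [Finset.mem_compl] at hwQ
  refine ⟨insert w Q, Finset.card_insert_of_notMem hwQ, hM.insert hs ?_⟩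
  intro z hz
  obtain ⟨T, hT, hTc⟩ := Finset.exists_subset_card_eq hw3
  obtain ⟨N, hTN, hNQ, hN⟩ := Finset.exists_subsuperset_card_eq
    (Finset.insert_subset hz (hT.trans nb_sub))
    ((Finset.card_insert_le _ _).trans (by omega)) h5
  refine five_of_three hs hno hN (hM.mono hNQ) (fun h => hwQ (hNQ h)) ?_ z
    (hTN (Finset.mem_insert_self _ _))
  rw [← hTc]
  refine Finset.card_le_card fun u hu => ?_
  have := mem_nb.mp (hT hu)
  exact mem_nb.mpr ⟨hTN (Finset.mem_insert_of_mem hu), this.2⟩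

lemma no_K5 (hs : ∀ u v, c u v = c v u) (hno : NoTwo c) {N : Finset (Fin 20)}
    (hN : N.card = 5) (hM : Mo c col N) : False := by
  obtain ⟨Q6, h6, M6⟩ := extend hs hno (by omega) (by omega) hM
  obtain ⟨Q7, h7, M7⟩ := extend hs hno (by omega) (by omega) M6
  obtain ⟨Q, h8, M8⟩ := extend hs hno (by omega) (by omega) M7
  obtain ⟨s, hsQ, hc⟩ := Finset.exists_subset_card_eq (show 4 ≤ Q.card by omega)
  refine hno s (Q \ s) col col hc ?_ (M8.mono hsQ) (M8.mono Finset.sdiff_subset)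
    Finset.disjoint_sdiff
  rw [Finset.card_sdiff_of_subset hsQ]
  omega

end TwoK4

/-- any 2-edge-coloring of `K_20` containing a monochromatic `K_5`
contains two vertex-disjoint monochromatic copies of `K_4`. -/
theorem two_disjoint_mono_K4_of_mono_K5 (c : Fin 20 → Fin 20 → Bool)
    (hsymm : ∀ u v, c u v = c v u)
    (hK5 : ∃ N : Finset (Fin 20), N.card = 5 ∧ IsMono c N) :
    ∃ s₁ s₂ : Finset (Fin 20), s₁.card = 4 ∧ s₂.card = 4 ∧
      IsMono c s₁ ∧ IsMono c s₂ ∧ Disjoint s₁ s₂ := by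
  obtain ⟨N, hN, col, hM⟩ := hK5
  by_contra hcon
  refine TwoK4.no_K5 hsymm ?_ hN hM
  intro s t a b hs ht ha hb hd
  exact hcon ⟨s, t, hs, ht, ⟨a, ha⟩, ⟨b, hb⟩, hd⟩
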